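/- Fix integers n, m with 1 ≤ m ≤ (n+1)/2, let P := Y_{m,n−m+1} with I-coloring κ((i,j)) := j − i + m and J-coloring κ̃((i,j)) := the orbit of κ((i,j)) under k ↦ n+1−k. Let 𝓕̃(P) be the set of all order filters of P of the form S̃_{p_r}(⋯(S̃_{p_1}(∅))⋯) for some r ≥ 0 and p_1, …, p_r ∈ J (the orbit of the empty order filter under the operators S̃_p, p ∈ J). Then 𝓕̃(P) = {Y ∈ 𝓕(P) : 𝓘(Y) ∩ 𝓘̄(Y) = ∅}. -/

import Mathlib

/-- `F` is an order filter of the poset `α`: upward closed subset. -/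
def IsOrderFilter {α : Type*} [PartialOrder α] (F : Set α) : Prop :=
  ∀ ⦃x y : α⦄, x ∈ F → x ≤ y → y ∈ F

/-- `A_c(F)`: the union of all order filters `F'` with `F' \ F ⊆ κ⁻¹({c})`. -/
def Aop {α C : Type*} [PartialOrder α] (κ : α → C) (c : C) (F : Set α) : Set α :=
  ⋃₀ {F' : Set α | IsOrderFilter F' ∧ F' \ F ⊆ κ ⁻¹' {c}}

/-- `R_c(F)`: the intersection of all order filters `F'` with `F \ F' ⊆ κ⁻¹({c})`. -/
def Rop {α C : Type*} [PartialOrder α] (κ : α → C) (c : C) (F : Set α) : Set α :=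
  ⋂₀ {F' : Set α | IsOrderFilter F' ∧ F \ F' ⊆ κ ⁻¹' {c}}

open Classical in
/-- `S_c(F) := (A_c(F) \ F) ∪ R_c(F)` if this is an order filter, and `F` otherwise. -/
noncomputable def Sop {α C : Type*} [PartialOrder α] (κ : α → C) (c : C) (F : Set α) : Set α :=
  if IsOrderFilter ((Aop κ c F \ F) ∪ Rop κ c F) then (Aop κ c F \ F) ∪ Rop κ c F else F

/-- The rectangular Young diagram poset `Y_{m,N}` (cells `(i,j)`, `1 ≤ i ≤ m`,
`1 ≤ j ≤ N`, with `(i₁,j₁) ≤ (i₂,j₂)` iff `i₁ ≥ i₂` and `j₁ ≥ j₂`), realized as the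
product of two dual finite chains. -/
abbrev YD (m N : ℕ) := (Fin m)ᵒᵈ × (Fin N)ᵒᵈ

/-- The `I`-coloring of `Y_{m, n−m+1}` for type `A_n`: `κ((i,j)) = j − i + m`
(in 1-indexed coordinates), with values in `{1,…,n}`. -/
def ykappa (m N : ℕ) (x : YD m N) : ℤ :=
  ((OrderDual.ofDual x.2 : Fin N) : ℤ) - ((OrderDual.ofDual x.1 : Fin m) : ℤ) + m

/-- The `J`-coloring of `Y_{m, n−m+1}`: the orbit of the color `κ((i,j)) = j − i + m`
under the Dynkin diagram involution `k ↦ n+1−k`, encoded by its minimal element, i.e.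
`κ̃((i,j)) = min{ j−i+m , i−j+n−m+1 }`. -/
def ytkappa (n m N : ℕ) (x : YD m N) : ℤ :=
  min (ykappa m N x) ((n : ℤ) + 1 - ykappa m N x)

/-- The length `𝐤_i` of row `i` of a subset `Y` of `Y_{m,N}`:
the number of cells of `Y` in row `i`. -/
noncomputable def rowLen (m N : ℕ) (Y : Set (YD m N)) (i : Fin m) : ℕ :=
  Set.ncard {j : Fin N | (OrderDual.toDual i, OrderDual.toDual j) ∈ Y}

/-- `𝓘(Y) := {𝐤_i + m + 1 − i : 1 ≤ i ≤ m} ⊆ {1,…,n+1}` (here the row index `i`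
is 0-indexed, so the element for row `i` is `𝐤_i + m − i`). -/
def ISet (m N : ℕ) (Y : Set (YD m N)) : Set ℤ :=
  {z : ℤ | ∃ i : Fin m, z = (rowLen m N Y i : ℤ) + m - (i : ℤ)}

/-- One application of a folded operator `S̃_p` for some orbit `p ∈ J`: every orbit of
the involution `k ↦ n+1−k` on `{1,…,n}` is of the form `{k, n+1−k}` for some
`k ∈ {1,…,n}`, and is encoded (as a value of the `J`-coloring `κ̃`) by its minimum
`min(k, n+1−k)`. -/
def foldStep (n m N : ℕ) (F F' : Set (YD m N)) : Prop :=
  ∃ k : ℤ, 1 ≤ k ∧ k ≤ n ∧ F' = Sop (ytkappa n m N) (min k ((n : ℤ) + 1 - k)) F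

/-!
An order filter of `Y_{m,N}` is recorded by its bead set `𝓘(Y)`, an `m`-element subset of
`{1, …, m + N}`: the cell of color `k` in row `i` (counted from `0`) belongs to `Y` iff more than
`i` beads lie to the right of `k`. On a bead set without complementary beads the operator `S̃_p`
acts through an involution of the positions, the longest element of the parabolic subgroup
attached to `p`, which commutes with `z ↦ n + 2 - z`. Hence the orbit of `∅` stays among the
bead sets without complementary beads. Conversely, unless such a bead set is `{1, …, m}`, some
bead has a free position directly to its left, and the corresponding involution lowers the sum of
the beads.
-/

open Finset

section ColoredPoset

variable {α C : Type*} [PartialOrder α] {κ : α → C} {c : C} {F G : Set α} {x : α}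

theorem mem_Aop_iff : x ∈ Aop κ c F ↔ ∀ y, x ≤ y → y ∉ F → κ y = c := by
  constructor
  · rintro ⟨F', ⟨hF', hc⟩, hx⟩ y hxy hy
    exact hc ⟨hF' hx hxy, hy⟩
  · intro hx
    refine ⟨{z | ∀ y, z ≤ y → y ∉ F → κ y = c}, ⟨?_, fun z hz => hz.1 z le_rfl hz.2⟩, hx⟩
    exact fun z w hz hzw y hwy => hz y (hzw.trans hwy)

theorem mem_Rop_iff : x ∈ Rop κ c F ↔ ∃ y ≤ x, y ∈ F ∧ κ y ≠ c := by
  constructor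
  · intro hx
    refine hx {z | ∃ y ≤ z, y ∈ F ∧ κ y ≠ c} ⟨?_, ?_⟩
    · exact fun z w ⟨y, hyz, hy⟩ hzw => ⟨y, hyz.trans hzw, hy⟩
    · exact fun z hz => by_contra fun hc => hz.2 ⟨z, le_rfl, hz.1, hc⟩
  · rintro ⟨y, hyx, hy, hyc⟩ F' ⟨hF', hc⟩
    exact hF' (by_contra fun hy' => hyc (hc ⟨hy, hy'⟩)) hyx

theorem Sop_eq_of_agree_off_color (hF : IsOrderFilter F) (hG : IsOrderFilter G)
    (hagree : ∀ x, κ x ≠ c → (x ∈ G ↔ x ∈ F))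
    (hadd : ∀ x, κ x = c → x ∉ F → x ∉ G → ∃ y, x ≤ y ∧ y ∉ F ∧ κ y ≠ c)
    (hremove : ∀ x, κ x = c → x ∈ F → x ∈ G → ∃ y ≤ x, y ∈ F ∧ κ y ≠ c) :
    Sop κ c F = G := by
  have hA : ∀ x ∉ F, x ∈ Aop κ c F ↔ x ∈ G := fun x hx => by
    rw [mem_Aop_iff]
    refine ⟨fun h => by_contra fun hxG => ?_, fun hxG y hxy hy => by_contra fun hyc =>
      hy ((hagree y hyc).1 (hG hxG hxy))⟩
    obtain ⟨y, hxy, hy, hyc⟩ := hadd x (h x le_rfl hx) hx hxG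
    exact hyc (h y hxy hy)
  have hR : ∀ x ∈ F, x ∈ Rop κ c F ↔ x ∈ G := fun x hx => by
    rw [mem_Rop_iff]
    refine ⟨fun ⟨y, hyx, hy, hyc⟩ => hG ((hagree y hyc).2 hy) hyx, fun hxG => ?_⟩
    by_cases hxc : κ x = c
    · exact hremove x hxc hx hxG
    · exact ⟨x, le_rfl, hx, hxc⟩
  have hRF : Rop κ c F ⊆ F := fun x hx =>
    have ⟨_, hyx, hy, _⟩ := mem_Rop_iff.1 hx
    hF hy hyx
  have hS : Aop κ c F \ F ∪ Rop κ c F = G := by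
    ext x
    by_cases hx : x ∈ F
    · simp [hx, hR x hx]
    · have hxR : x ∉ Rop κ c F := fun h => hx (hRF h)
      simp [hx, hA x hx, hxR]
  rw [Sop, hS, if_pos hG]

end ColoredPoset

namespace YD

variable {m N : ℕ}

/-- The row of a cell, counted from `0`. Together with the color `ykappa` it determines the cell:
the column, counted from `0`, is `row x + ykappa m N x - m`. -/
def row (x : YD m N) : ℤ :=
  ((OrderDual.ofDual x.1 : Fin m) : ℤ)

theorem row_nonneg (x : YD m N) : 0 ≤ x.row :=
  Int.natCast_nonneg _

theorem row_lt (x : YD m N) : x.row < m :=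
  Int.ofNat_lt.2 (OrderDual.ofDual x.1).isLt

theorem le_row_add_ykappa (x : YD m N) : m ≤ x.row + ykappa m N x := by
  simp only [row, ykappa]
  omega

theorem row_add_ykappa_lt (x : YD m N) : x.row + ykappa m N x < m + N := by
  simp only [row, ykappa]
  omega

theorem le_iff {x y : YD m N} :
    x ≤ y ↔ y.row ≤ x.row ∧ y.row + ykappa m N y ≤ x.row + ykappa m N x := by
  change OrderDual.ofDual y.1 ≤ OrderDual.ofDual x.1 ∧
    OrderDual.ofDual y.2 ≤ OrderDual.ofDual x.2 ↔ _
  simp only [row, ykappa, Fin.le_def]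
  omega

theorem exists_row_eq_ykappa_eq {i k : ℤ} (hi : 0 ≤ i) (him : i < m) (hm : m ≤ i + k)
    (hN : i + k < m + N) : ∃ x : YD m N, x.row = i ∧ ykappa m N x = k := by
  refine ⟨(OrderDual.toDual ⟨i.toNat, by omega⟩,
    OrderDual.toDual ⟨(i + k - m).toNat, by omega⟩), ?_, ?_⟩ <;>
  · simp only [row, ykappa, OrderDual.ofDual_toDual]
    omega

end YD

section BeadsAbove

variable {B : Finset ℤ} {k l z : ℤ}

/-- The number of beads of `B` strictly to the right of `k`. -/
def beadsAbove (B : Finset ℤ) (k : ℤ) : ℤ :=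
  #{b ∈ B | k < b}

theorem beadsAbove_nonneg (B : Finset ℤ) (k : ℤ) : 0 ≤ beadsAbove B k :=
  Int.natCast_nonneg _

theorem beadsAbove_le_card (B : Finset ℤ) (k : ℤ) : beadsAbove B k ≤ #B :=
  Int.ofNat_le.2 (card_filter_le _ _)

theorem beadsAbove_antitone (B : Finset ℤ) : Antitone (beadsAbove B) := fun _ _ hkl =>
  Int.ofNat_le.2 (card_le_card (monotone_filter_right B fun _ _ => hkl.trans_lt))

theorem beadsAbove_le_add_sub (B : Finset ℤ) (hkl : k ≤ l) :
    beadsAbove B k ≤ beadsAbove B l + (l - k) := by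
  have hsub : {b ∈ B | k < b} ⊆ {b ∈ B | l < b} ∪ Ioc k l := by
    intro b
    simp only [mem_filter, mem_union, mem_Ioc]
    grind
  have hcard := (card_le_card hsub).trans (card_union_le _ _)
  rw [Int.card_Ioc] at hcard
  simp only [beadsAbove]
  omega

theorem beadsAbove_congr (hkl : k ≤ l) (h : ∀ b ∈ B, k < b → l < b) :
    beadsAbove B k = beadsAbove B l :=
  congrArg (fun s : Finset ℤ => (#s : ℤ))
    (filter_congr fun b hb => ⟨h b hb, hkl.trans_lt⟩)

theorem beadsAbove_sub_one_of_mem (hz : z ∈ B) : beadsAbove B (z - 1) = beadsAbove B z + 1 := by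
  have hins : {b ∈ B | z - 1 < b} = insert z {b ∈ B | z < b} := by
    ext b
    simp only [mem_filter, mem_insert]
    grind
  rw [beadsAbove, hins, card_insert_of_notMem (by simp)]
  simp [beadsAbove]

theorem beadsAbove_sub_one_of_notMem (hz : z ∉ B) : beadsAbove B (z - 1) = beadsAbove B z :=
  beadsAbove_congr (by omega) fun b hb _ => by grind

theorem beadsAbove_image {f : ℤ → ℤ} (hf : f.Injective) (h : ∀ z, k < f z ↔ k < z) :
    beadsAbove (B.image f) k = beadsAbove B k := by
  simp only [beadsAbove, filter_image, h, card_image_of_injective _ hf]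

end BeadsAbove

section BeadFilter

variable {m N : ℕ} {B : Finset ℤ}

/-- The order filter of `Y_{m,N}` with bead set `B`: its row `i`, counted from `0`, ends where the
`i`-th largest bead of `B` prescribes. -/
def beadFilter (m N : ℕ) (B : Finset ℤ) : Set (YD m N) :=
  {x | x.row < beadsAbove B (ykappa m N x)}

theorem mem_beadFilter {x : YD m N} :
    x ∈ beadFilter m N B ↔ x.row < beadsAbove B (ykappa m N x) :=
  Iff.rfl

theorem isOrderFilter_beadFilter (m N : ℕ) (B : Finset ℤ) : IsOrderFilter (beadFilter m N B) := by
  intro x y hx hxy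
  rw [mem_beadFilter] at hx ⊢
  rw [YD.le_iff] at hxy
  rcases le_total (ykappa m N y) (ykappa m N x) with h | h
  · have := beadsAbove_antitone B h
    omega
  · have := beadsAbove_le_add_sub B h
    omega

theorem beadFilter_eq_empty (h : ∀ b ∈ B, b ≤ m) : beadFilter m N B = ∅ := by
  refine Set.eq_empty_of_forall_notMem fun x hx => ?_
  rw [mem_beadFilter] at hx
  have hrow := x.le_row_add_ykappa
  have hm : beadsAbove B m = 0 := by
    simpa [beadsAbove, filter_eq_empty_iff] using h
  rcases le_total (ykappa m N x) m with hk | hk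
  · have := beadsAbove_le_add_sub B hk
    omega
  · have := beadsAbove_antitone B hk
    have := x.row_nonneg
    omega

/-- `B` is the bead set of an order filter of `Y_{m,N}`: an `m`-element subset of
`{1, …, m + N}`. -/
structure IsBeadSet (m N : ℕ) (B : Finset ℤ) : Prop where
  subset_Icc : B ⊆ Icc 1 (m + N : ℤ)
  card_eq : #B = m

namespace IsBeadSet

variable {a : ℤ} {x : YD m N}

theorem sub_le_beadsAbove (hB : IsBeadSet m N B) (ha : 0 ≤ a) : m - a ≤ beadsAbove B a := by
  have hzero : beadsAbove B 0 = m := by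
    rw [beadsAbove, filter_true_of_mem, hB.card_eq]
    exact fun b hb => (mem_Icc.1 (hB.subset_Icc hb)).1
  have := beadsAbove_le_add_sub B ha
  omega

theorem beadsAbove_le_sub (hB : IsBeadSet m N B) (ha : a ≤ m + N) :
    beadsAbove B a ≤ m + N - a := by
  have hlast : beadsAbove B (m + N) = 0 := by
    rw [beadsAbove, filter_false_of_mem]
    · simp
    · exact fun b hb => (mem_Icc.1 (hB.subset_Icc hb)).2.not_gt
  have := beadsAbove_le_add_sub B ha
  omega

theorem beadsAbove_le (hB : IsBeadSet m N B) (a : ℤ) : beadsAbove B a ≤ m :=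
  hB.card_eq ▸ beadsAbove_le_card B a

theorem exists_ge_notMem_beadFilter (hB : IsBeadSet m N B) (ha : 0 ≤ a)
    (h : beadsAbove B a + max 0 (a - ykappa m N x) ≤ x.row) :
    ∃ y, x ≤ y ∧ y ∉ beadFilter m N B ∧ ykappa m N y = a := by
  have hnonneg := beadsAbove_nonneg B a
  have hle := hB.sub_le_beadsAbove ha
  have hx := x.row_lt
  have hx' := x.row_add_ykappa_lt
  obtain ⟨y, hrow, hcol⟩ := YD.exists_row_eq_ykappa_eq (m := m) (N := N)
    (i := x.row - max 0 (a - ykappa m N x)) (k := a)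
    (by omega) (by omega) (by omega) (by omega)
  refine ⟨y, YD.le_iff.2 ⟨by omega, by omega⟩, ?_, hcol⟩
  rw [mem_beadFilter, hcol]
  omega

theorem exists_le_mem_beadFilter (hB : IsBeadSet m N B) (ha : a ≤ m + N)
    (h : x.row + max 0 (ykappa m N x - a) < beadsAbove B a) :
    ∃ y ≤ x, y ∈ beadFilter m N B ∧ ykappa m N y = a := by
  have hle := hB.beadsAbove_le a
  have hle' := hB.beadsAbove_le_sub ha
  have hx := x.row_nonneg
  have hx' := x.le_row_add_ykappa
  obtain ⟨y, hrow, hcol⟩ := YD.exists_row_eq_ykappa_eq (m := m) (N := N)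
    (i := x.row + max 0 (ykappa m N x - a)) (k := a)
    (by omega) (by omega) (by omega) (by omega)
  refine ⟨y, YD.le_iff.2 ⟨by omega, by omega⟩, ?_, hcol⟩
  rw [mem_beadFilter, hcol]
  omega

end IsBeadSet

end BeadFilter

section RowLen

variable {m N : ℕ} {B : Finset ℤ} {Y : Set (YD m N)}

theorem rowLen_le (Y : Set (YD m N)) (i : Fin m) : rowLen m N Y i ≤ N := by
  simpa [rowLen] using Set.ncard_le_card {j : Fin N | (OrderDual.toDual i, OrderDual.toDual j) ∈ Y}

theorem mem_iff_val_lt_ncard_of_isLowerSet {S : Set (Fin N)} (hS : IsLowerSet S)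
    (j : Fin N) : j ∈ S ↔ (j : ℕ) < S.ncard := by
  constructor
  · intro hj
    have hsub : Set.Iic j ⊆ S := fun _ hb => hS hb hj
    have := Set.ncard_le_ncard hsub
    simp [Set.ncard_eq_toFinset_card'] at this ⊢
    omega
  · contrapose!
    intro hj
    have hsub : S ⊆ Set.Iio j := fun b hb => not_le.1 fun hjb => hj (hS hjb hb)
    have := Set.ncard_le_ncard hsub
    simp [Set.ncard_eq_toFinset_card'] at this ⊢
    omega

/-- The bead of row `i`, that is, the element of `𝓘(Y)` which row `i` contributes. -/
noncomputable def rowBead (Y : Set (YD m N)) (i : Fin m) : ℤ :=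
  rowLen m N Y i + m - i

theorem ISet_eq_range_rowBead (Y : Set (YD m N)) : ISet m N Y = Set.range (rowBead Y) := by
  ext z
  simp only [ISet, rowBead, Set.mem_ofPred_eq, Set.mem_range, eq_comm]

theorem sub_le_rowBead (Y : Set (YD m N)) (i : Fin m) : m - i ≤ rowBead Y i := by
  simp only [rowBead]
  omega

theorem rowBead_le_sub (Y : Set (YD m N)) (i : Fin m) : rowBead Y i ≤ m + N - i := by
  have := rowLen_le Y i
  simp only [rowBead]
  omega

theorem mem_iff_ykappa_lt_rowBead (hY : IsOrderFilter Y) (x : YD m N) :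
    x ∈ Y ↔ ykappa m N x < rowBead Y (OrderDual.ofDual x.1) := by
  have hlower : IsLowerSet {j : Fin N | (x.1, OrderDual.toDual j) ∈ Y} :=
    fun j j' hj hmem => hY hmem ⟨le_rfl, hj⟩
  have hmem := mem_iff_val_lt_ncard_of_isLowerSet hlower (OrderDual.ofDual x.2)
  change x ∈ Y ↔ _ < rowLen m N Y (OrderDual.ofDual x.1) at hmem
  rw [hmem, ykappa, rowBead]
  omega

theorem rowBead_strictAnti (hY : IsOrderFilter Y) : StrictAnti (rowBead Y) := by
  intro i i' hi
  have hlen : rowLen m N Y i' ≤ rowLen m N Y i :=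
    Set.ncard_le_ncard fun j hj => hY hj ⟨hi.le, le_rfl⟩
  rw [Fin.lt_def] at hi
  simp only [rowBead]
  omega

theorem exists_eq_beadFilter (hY : IsOrderFilter Y) :
    ∃ B, IsBeadSet m N B ∧ Y = beadFilter m N B := by
  have hanti := rowBead_strictAnti hY
  refine ⟨univ.image (rowBead Y), ⟨?_, ?_⟩, ?_⟩
  · simp only [image_subset_iff, mem_Icc]
    intro i _
    have := sub_le_rowBead Y i
    have := rowBead_le_sub Y i
    omega
  · rw [card_image_of_injective _ hanti.injective, card_univ, Fintype.card_fin]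
  · ext x
    have hlower : IsLowerSet {i : Fin m | ykappa m N x < rowBead Y i} :=
      fun i i' hi hmem => hmem.trans_le (hanti.antitone hi)
    have hcount : beadsAbove (univ.image (rowBead Y)) (ykappa m N x) =
        {i : Fin m | ykappa m N x < rowBead Y i}.ncard := by
      rw [beadsAbove, filter_image, card_image_of_injective _ hanti.injective,
        Set.ncard_eq_toFinset_card', Set.toFinset_ofPred]
    rw [mem_iff_ykappa_lt_rowBead hY, mem_beadFilter, hcount, YD.row, Nat.cast_lt]
    exact mem_iff_val_lt_ncard_of_isLowerSet hlower _

theorem IsBeadSet.lt_rowBead_beadFilter_iff (hB : IsBeadSet m N B) (i : Fin m) {k : ℤ}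
    (hk : 0 ≤ k) (hkN : k ≤ m + N) :
    k < rowBead (beadFilter m N B) i ↔ i < beadsAbove B k := by
  have := sub_le_rowBead (beadFilter m N B) i
  have := rowBead_le_sub (beadFilter m N B) i
  have := hB.sub_le_beadsAbove hk
  have := hB.beadsAbove_le_sub hkN
  by_cases hcell : m ≤ i + k ∧ i + k < m + N
  · obtain ⟨x, hrow, hcol⟩ := YD.exists_row_eq_ykappa_eq (i := i) (by omega) (by omega)
      hcell.1 hcell.2
    have hi : OrderDual.ofDual x.1 = i := Fin.ext (Int.ofNat.inj hrow)
    rw [← hi, ← hcol, ← mem_iff_ykappa_lt_rowBead (isOrderFilter_beadFilter m N B)]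
    rfl
  · omega

theorem IsBeadSet.ISet_beadFilter (hB : IsBeadSet m N B) : ISet m N (beadFilter m N B) = B := by
  rw [ISet_eq_range_rowBead]
  ext z
  rw [Set.mem_range, mem_coe]
  constructor
  · rintro ⟨i, rfl⟩
    by_contra hz
    have := sub_le_rowBead (beadFilter m N B) i
    have := rowBead_le_sub (beadFilter m N B) i
    have hjump := beadsAbove_sub_one_of_notMem hz
    have hpred := hB.lt_rowBead_beadFilter_iff i
      (k := rowBead (beadFilter m N B) i - 1) (by omega) (by omega)
    have hself := hB.lt_rowBead_beadFilter_iff i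
      (k := rowBead (beadFilter m N B) i) (by omega) (by omega)
    omega
  · intro hz
    obtain ⟨hz1, hzN⟩ := mem_Icc.1 (hB.subset_Icc hz)
    have hjump := beadsAbove_sub_one_of_mem hz
    have := beadsAbove_nonneg B z
    have := hB.beadsAbove_le (z - 1)
    -- The number of beads to the right of `z` is the row of the bead `z`.
    let i : Fin m := ⟨(beadsAbove B z).toNat, by omega⟩
    have hi : (i : ℤ) = beadsAbove B z := Int.toNat_of_nonneg (by omega)
    have hpred := hB.lt_rowBead_beadFilter_iff i (k := z - 1) (by omega) (by omega)
    have hself := hB.lt_rowBead_beadFilter_iff i (k := z) (by omega) (by omega)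
    exact ⟨i, by omega⟩

end RowLen

section ComplementFree

variable {n : ℕ} {c z : ℤ} {B : Finset ℤ}

/-- No two beads of `B`, equal or not, are exchanged by `z ↦ n + 2 - z`. -/
def ComplementFree (n : ℕ) (B : Finset ℤ) : Prop :=
  ∀ b ∈ B, (n : ℤ) + 2 - b ∉ B

theorem complementFree_iff_inter_image_eq_empty :
    ComplementFree n B ↔ (B : Set ℤ) ∩ (fun z : ℤ => (n : ℤ) + 2 - z) '' B = ∅ := by
  rw [← Set.disjoint_iff_inter_eq_empty, Set.disjoint_right, Set.forall_mem_image]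
  rfl

/-- The involution of the bead positions `{1, …, n + 1}` induced by `S̃_p`, where `p` is the orbit
of the color `c ≤ n + 1 - c`. If the colors `c` and `n + 1 - c` are not adjacent it exchanges `c`
with `c + 1` and `n + 1 - c` with `n + 2 - c`; otherwise `n = 2 * c` and it is the longest element
of the symmetric group on `{c, c + 1, c + 2}`. -/
def foldedReflection (n : ℕ) (c z : ℤ) : ℤ :=
  if (n : ℤ) = 2 * c then
    if z = c then z + 2 else if z = c + 2 then z - 2 else z
  else
    if z = c ∨ z = n + 1 - c then z + 1
    else if z = c + 1 ∨ z = n + 2 - c then z - 1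
    else z

theorem foldedReflection_involutive (hc : 2 * c ≤ n + 1) :
    Function.Involutive (foldedReflection n c) := by
  intro z
  unfold foldedReflection
  split_ifs <;> omega

theorem foldedReflection_compl (hc : 2 * c ≤ n + 1) (z : ℤ) :
    foldedReflection n c (n + 2 - z) = n + 2 - foldedReflection n c z := by
  unfold foldedReflection
  split_ifs <;> omega

theorem foldedReflection_mem_Icc (hc₁ : 1 ≤ c) (hc : 2 * c ≤ n + 1) (hz : z ∈ Icc 1 (n + 1 : ℤ)) :
    foldedReflection n c z ∈ Icc 1 (n + 1 : ℤ) := by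
  rw [mem_Icc] at *
  unfold foldedReflection
  split_ifs <;> omega

theorem mem_image_foldedReflection (hc : 2 * c ≤ n + 1) :
    z ∈ B.image (foldedReflection n c) ↔ foldedReflection n c z ∈ B := by
  conv_lhs => rw [← foldedReflection_involutive hc z]
  exact (foldedReflection_involutive hc).injective.mem_finset_image

theorem image_image_foldedReflection (hc : 2 * c ≤ n + 1) :
    (B.image (foldedReflection n c)).image (foldedReflection n c) = B := by
  rw [image_image, (foldedReflection_involutive hc).comp_self, image_id]

theorem ComplementFree.image_foldedReflection (hB : ComplementFree n B) (hc : 2 * c ≤ n + 1) :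
    ComplementFree n (B.image (foldedReflection n c)) := by
  intro b hb
  rw [mem_image_foldedReflection hc] at hb ⊢
  rw [foldedReflection_compl hc]
  exact hB _ hb

theorem IsBeadSet.image_foldedReflection {m N : ℕ} (hN : m + N = n + 1) (hB : IsBeadSet m N B)
    (hc₁ : 1 ≤ c) (hc : 2 * c ≤ n + 1) : IsBeadSet m N (B.image (foldedReflection n c)) where
  subset_Icc := by
    have hcast : (m + N : ℤ) = n + 1 := by exact_mod_cast hN
    rw [hcast, image_subset_iff]
    exact fun b hb => foldedReflection_mem_Icc hc₁ hc (hcast ▸ hB.subset_Icc hb)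
  card_eq := by
    rw [card_image_of_injective _ (foldedReflection_involutive hc).injective, hB.card_eq]

theorem beadsAbove_image_foldedReflection {k : ℤ} (hc : 2 * c ≤ n + 1)
    (hk : min k ((n : ℤ) + 1 - k) ≠ c) :
    beadsAbove (B.image (foldedReflection n c)) k = beadsAbove B k := by
  refine beadsAbove_image (foldedReflection_involutive hc).injective fun z => ?_
  unfold foldedReflection
  split_ifs <;> omega

end ComplementFree

section SwapWindow

variable {n : ℕ} {c k a b i : ℤ} {B : Finset ℤ}

/-- The positions `a < b` exchanged by `foldedReflection n c` around the color `k` of the orbit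
of `c`. Either `b = a + 1`, or `n = 2 * c` and `b = a + 2`; in the latter case
complement-freeness keeps the position `a + 1` empty and leaves at most one bead in
`{a, b}`. -/
structure IsSwapWindow (n : ℕ) (c k : ℤ) (B : Finset ℤ) (a b : ℤ) : Prop where
  pos : 0 < a
  le_succ : b ≤ n + 1
  left_le : a ≤ k
  lt_right : k < b
  reflection_left : foldedReflection n c a = b
  color_left_ne : min (a - 1) ((n : ℤ) + 1 - (a - 1)) ≠ c
  color_right_ne : min b ((n : ℤ) + 1 - b) ≠ c
  reflection_between : ∀ t, a < t → t < b → foldedReflection n c t = t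
  notMem_between : ∀ t, a < t → t < b → t ∉ B
  eq_succ_of_mem : a ∈ B → b ∈ B → b = a + 1

theorem ComplementFree.exists_isSwapWindow (hB : ComplementFree n B) (hc₁ : 1 ≤ c)
    (hk : min k ((n : ℤ) + 1 - k) = c) :
    ∃ a b, IsSwapWindow n c k B a b := by
  by_cases hn : (n : ℤ) = 2 * c
  · have hmid : c + 1 ∉ B := fun h => hB _ h (by rwa [show (n : ℤ) + 2 - (c + 1) = c + 1 by omega])
    have hends : c ∈ B → c + 2 ∉ B := fun h => by
      simpa [show (n : ℤ) + 2 - c = c + 2 by omega] using hB c h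
    refine ⟨c, c + 2, by omega, by omega, by omega, by omega, by simp [foldedReflection, hn],
      by omega, by omega, fun t _ _ => ?_, fun t _ _ => ?_, fun ha hb => absurd hb (hends ha)⟩
    · rw [foldedReflection, if_pos hn, if_neg (by omega), if_neg (by omega)]
    · rwa [show t = c + 1 by omega]
  · refine ⟨k, k + 1, by omega, by omega, le_rfl, by omega, ?_, by omega, by omega,
      by omega, by omega, fun _ _ => rfl⟩
    rw [foldedReflection, if_neg hn, if_pos (by omega)]

namespace IsSwapWindow

theorem image (w : IsSwapWindow n c k B a b) (hc : 2 * c ≤ n + 1) :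
    IsSwapWindow n c k (B.image (foldedReflection n c)) a b where
  __ := w
  notMem_between t hat htb := by
    rw [mem_image_foldedReflection hc, w.reflection_between t hat htb]
    exact w.notMem_between t hat htb
  eq_succ_of_mem := by
    rw [mem_image_foldedReflection hc, mem_image_foldedReflection hc, ← w.reflection_left,
      foldedReflection_involutive hc, w.reflection_left]
    exact fun hb ha => w.eq_succ_of_mem ha hb

theorem left_mem_image (w : IsSwapWindow n c k B a b) (hc : 2 * c ≤ n + 1) :
    a ∈ B.image (foldedReflection n c) ↔ b ∈ B := by
  rw [mem_image_foldedReflection hc, w.reflection_left]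

theorem right_mem_image (w : IsSwapWindow n c k B a b) (hc : 2 * c ≤ n + 1) :
    b ∈ B.image (foldedReflection n c) ↔ a ∈ B := by
  rw [mem_image_foldedReflection hc, ← w.reflection_left, foldedReflection_involutive hc]

theorem beadsAbove_left (w : IsSwapWindow n c k B a b) (ha : a ∉ B) :
    beadsAbove B (a - 1) = beadsAbove B k := by
  have := w.left_le
  refine beadsAbove_congr (by omega) fun t ht hat => ?_
  have hta : t ≠ a := ne_of_mem_of_not_mem ht ha
  have htb : ¬ t < b := fun htb => w.notMem_between t (by omega) htb ht
  have := w.lt_right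
  omega

theorem beadsAbove_right (w : IsSwapWindow n c k B a b) (hb : b ∉ B) :
    beadsAbove B b = beadsAbove B k := by
  refine (beadsAbove_congr w.lt_right.le fun t ht hkt => ?_).symm
  have htb : t ≠ b := ne_of_mem_of_not_mem ht hb
  have : ¬ t < b := fun htb => w.notMem_between t (w.left_le.trans_lt hkt) htb ht
  omega

end IsSwapWindow

-- A cell of color `k` in row `i` outside both order filters is blocked by a cell outside the first
-- one: in the same row if the window holds at most one bead, in the previous row if it holds two.
theorem ComplementFree.exists_beadsAbove_add_le (hB : ComplementFree n B) (hc₁ : 1 ≤ c)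
    (hk : min k ((n : ℤ) + 1 - k) = c) (hi : beadsAbove B k ≤ i)
    (hi' : beadsAbove (B.image (foldedReflection n c)) k ≤ i) :
    ∃ a, 0 ≤ a ∧ min a ((n : ℤ) + 1 - a) ≠ c ∧ beadsAbove B a + max 0 (a - k) ≤ i := by
  obtain ⟨a, b, w⟩ := hB.exists_isSwapWindow hc₁ hk
  have hc : 2 * c ≤ n + 1 := by omega
  have hpos := w.pos
  have hak := w.left_le
  have hkb := w.lt_right
  by_cases ha : a ∈ B
  · by_cases hb : b ∈ B
    · have hba := w.eq_succ_of_mem ha hb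
      have hjump := beadsAbove_sub_one_of_mem hb
      rw [show b - 1 = k by omega] at hjump
      exact ⟨b, by omega, w.color_right_ne, by omega⟩
    · have hleft := (w.image hc).beadsAbove_left ((w.left_mem_image hc).not.2 hb)
      rw [beadsAbove_image_foldedReflection hc w.color_left_ne] at hleft
      exact ⟨a - 1, by omega, w.color_left_ne, by omega⟩
  · have hleft := w.beadsAbove_left ha
    exact ⟨a - 1, by omega, w.color_left_ne, by omega⟩

theorem ComplementFree.exists_add_lt_beadsAbove (hB : ComplementFree n B) (hc₁ : 1 ≤ c)
    (hk : min k ((n : ℤ) + 1 - k) = c) (hi : i < beadsAbove B k)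
    (hi' : i < beadsAbove (B.image (foldedReflection n c)) k) :
    ∃ a : ℤ, a ≤ n + 1 ∧ min a ((n : ℤ) + 1 - a) ≠ c ∧ i + max 0 (k - a) < beadsAbove B a := by
  obtain ⟨a, b, w⟩ := hB.exists_isSwapWindow hc₁ hk
  have hc : 2 * c ≤ n + 1 := by omega
  have hbn := w.le_succ
  have hak := w.left_le
  have hkb := w.lt_right
  by_cases hb : b ∈ B
  · by_cases ha : a ∈ B
    · have hba := w.eq_succ_of_mem ha hb
      have hjump := beadsAbove_sub_one_of_mem ha
      rw [show a = k by omega] at hjump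
      exact ⟨k - 1, by omega, (show a = k by omega) ▸ w.color_left_ne, by omega⟩
    · have hright := (w.image hc).beadsAbove_right ((w.right_mem_image hc).not.2 ha)
      rw [beadsAbove_image_foldedReflection hc w.color_right_ne] at hright
      exact ⟨b, by omega, w.color_right_ne, by omega⟩
  · have hright := w.beadsAbove_right hb
    exact ⟨b, by omega, w.color_right_ne, by omega⟩

end SwapWindow

section Orbit

variable {n m N : ℕ} {c z : ℤ} {B : Finset ℤ}

theorem Sop_beadFilter (hN : m + N = n + 1) (hB : IsBeadSet m N B) (hfree : ComplementFree n B)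
    (hc₁ : 1 ≤ c) (hc : 2 * c ≤ n + 1) :
    Sop (ytkappa n m N) c (beadFilter m N B) =
      beadFilter m N (B.image (foldedReflection n c)) := by
  refine Sop_eq_of_agree_off_color (isOrderFilter_beadFilter m N _)
    (isOrderFilter_beadFilter m N _) (fun x hx => ?_) (fun x hx hF hG => ?_)
    (fun x hx hF hG => ?_)
  · rw [mem_beadFilter, mem_beadFilter, beadsAbove_image_foldedReflection hc hx]
  · rw [mem_beadFilter, not_lt] at hF hG
    obtain ⟨a, ha, hac, hle⟩ := hfree.exists_beadsAbove_add_le hc₁ hx hF hG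
    obtain ⟨y, hxy, hy, rfl⟩ := hB.exists_ge_notMem_beadFilter ha hle
    exact ⟨y, hxy, hy, hac⟩
  · rw [mem_beadFilter] at hF hG
    obtain ⟨a, ha, hac, hlt⟩ := hfree.exists_add_lt_beadsAbove hc₁ hx hF hG
    obtain ⟨y, hyx, hy, rfl⟩ := hB.exists_le_mem_beadFilter (by omega) hlt
    exact ⟨y, hyx, hy, hac⟩

theorem exists_beadFilter_of_reflTransGen (hm : 2 * m ≤ n + 1) (hN : m + N = n + 1)
    {Y : Set (YD m N)} (hY : Relation.ReflTransGen (foldStep n m N) ∅ Y) :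
    ∃ B, IsBeadSet m N B ∧ ComplementFree n B ∧ Y = beadFilter m N B := by
  induction hY with
  | refl =>
    refine ⟨Icc 1 (m : ℤ), ⟨Icc_subset_Icc_right (by omega), by simp⟩, fun b hb => ?_,
      (beadFilter_eq_empty fun b hb => (mem_Icc.1 hb).2).symm⟩
    rw [mem_Icc] at hb ⊢
    omega
  | tail _ hstep ih =>
    obtain ⟨B, hB, hfree, rfl⟩ := ih
    obtain ⟨k, hk₁, hkn, rfl⟩ := hstep
    have hc₁ : 1 ≤ min k ((n : ℤ) + 1 - k) := by omega
    have hc : 2 * min k ((n : ℤ) + 1 - k) ≤ n + 1 := by omega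
    exact ⟨_, hB.image_foldedReflection hN hc₁ hc, hfree.image_foldedReflection hc,
      Sop_beadFilter hN hB hfree hc₁ hc⟩

theorem IsBeadSet.exists_notMem_succ_mem (hB : IsBeadSet m N B) {b : ℤ} (hb : b ∈ B)
    (hmb : m < b) : ∃ z, 1 ≤ z ∧ z ∉ B ∧ z + 1 ∈ B := by
  by_contra! hclosed
  have hsub : Icc 1 b ⊆ B := by
    intro t ht
    rw [mem_Icc] at ht
    induction t, ht.2 using Int.leInductionDown with
    | base => exact hb
    | pred t _ ih =>
      exact by_contra fun hpred => hclosed (t - 1) ht.1 hpred (by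
        rw [sub_add_cancel]
        exact ih ⟨by omega, by omega⟩)
  have hcard := card_le_card hsub
  rw [hB.card_eq, Int.card_Icc] at hcard
  omega

theorem ComplementFree.foldedReflection_le (hB : ComplementFree n B) (hz : z ∉ B)
    (hz' : z + 1 ∈ B) {b : ℤ} (hb : b ∈ B) :
    foldedReflection n (min z (n + 1 - z)) b ≤ b := by
  have hbz : b ≠ z := ne_of_mem_of_not_mem hb hz
  have hbz' : b ≠ n + 1 - z := by
    rintro rfl
    exact hB _ hz' (by rwa [show (n : ℤ) + 2 - (z + 1) = n + 1 - z by ring])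
  unfold foldedReflection
  split_ifs <;> omega

theorem ComplementFree.foldedReflection_succ_lt (hB : ComplementFree n B) (hz : z + 1 ∈ B) :
    foldedReflection n (min z (n + 1 - z)) (z + 1) < z + 1 := by
  have hself : z + 1 ≠ n + 2 - (z + 1) := fun h => hB _ hz (h ▸ hz)
  unfold foldedReflection
  split_ifs <;> omega

theorem ComplementFree.sum_image_foldedReflection_lt (hB : ComplementFree n B) (hz₁ : 1 ≤ z)
    (hz : z ∉ B) (hz' : z + 1 ∈ B) :
    ∑ b ∈ B.image (foldedReflection n (min z (n + 1 - z))), b.toNat < ∑ b ∈ B, b.toNat := by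
  rw [sum_image (foldedReflection_involutive (by omega)).injective.injOn]
  refine sum_lt_sum (fun b hb => Int.toNat_le_toNat (hB.foldedReflection_le hz hz' hb))
    ⟨z + 1, hz', ?_⟩
  have := hB.foldedReflection_succ_lt hz'
  omega

theorem reflTransGen_foldStep_beadFilter (hN : m + N = n + 1) (hB : IsBeadSet m N B)
    (hfree : ComplementFree n B) :
    Relation.ReflTransGen (foldStep n m N) ∅ (beadFilter m N B) := by
  induction hs : ∑ b ∈ B, b.toNat using Nat.strong_induction_on generalizing B with
  | _ s ih =>
    by_cases hle : ∀ b ∈ B, b ≤ m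
    · rw [beadFilter_eq_empty hle]
    · push Not at hle
      obtain ⟨b, hb, hmb⟩ := hle
      obtain ⟨z, hz₁, hz, hz'⟩ := hB.exists_notMem_succ_mem hb hmb
      have hzn := (mem_Icc.1 (hB.subset_Icc hz')).2
      have hc₁ : 1 ≤ min z ((n : ℤ) + 1 - z) := by omega
      have hc : 2 * min z ((n : ℤ) + 1 - z) ≤ n + 1 := by omega
      have hB' := hB.image_foldedReflection hN hc₁ hc
      have hfree' := hfree.image_foldedReflection hc
      refine (ih _ (hs ▸ hfree.sum_image_foldedReflection_lt hz₁ hz hz') hB' hfree' rfl).tail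
        ⟨z, hz₁, by omega, ?_⟩
      rw [Sop_beadFilter hN hB' hfree' hc₁ hc, image_image_foldedReflection hc]

end Orbit

/-- Explicit description of `𝓕̃(P)` for `P = Y_{m,n−m+1}` (type `A_n` folded):
the set of order filters reachable from `∅` by the folded operators `S̃_p`, `p ∈ J`,
equals the set of order filters `Y` with `𝓘(Y) ∩ 𝓘̄(Y) = ∅`, where
`𝓘̄(Y) = {n+2−i : i ∈ 𝓘(Y)}`. -/
theorem foldOrbit_eq_selfComplementaryFree (n m : ℕ) (hm : 1 ≤ m) (hmn : 2 * m ≤ n + 1) :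
    {Y : Set (YD m (n - m + 1)) |
        Relation.ReflTransGen (foldStep n m (n - m + 1)) ∅ Y} =
      {Y : Set (YD m (n - m + 1)) | IsOrderFilter Y ∧
        ISet m (n - m + 1) Y ∩ ((fun z : ℤ => (n : ℤ) + 2 - z) '' ISet m (n - m + 1) Y)
          = ∅} := by
  have hN : m + (n - m + 1) = n + 1 := by omega
  ext Y
  rw [Set.mem_ofPred_eq, Set.mem_ofPred_eq]
  constructor
  · intro hY
    obtain ⟨B, hB, hfree, rfl⟩ := exists_beadFilter_of_reflTransGen hmn hN hY
    rw [hB.ISet_beadFilter]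
    exact ⟨isOrderFilter_beadFilter _ _ B, complementFree_iff_inter_image_eq_empty.1 hfree⟩
  · rintro ⟨hY, hI⟩
    obtain ⟨B, hB, rfl⟩ := exists_eq_beadFilter hY
    rw [hB.ISet_beadFilter] at hI
    exact reflTransGen_foldStep_beadFilter hN hB (complementFree_iff_inter_image_eq_empty.2 hI)
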